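/- Let G = (V,E) be a finite connected undirected graph with positive symmetric edge weights ω, let i ≠ j be vertices, and let U_k^{ij} denote the expected number of visits to vertex k (counting the visit at time 0) made by the random walk started at i before it first reaches j. Then for every vertex k, U_k^{ij} = (1/2)·ω(k)·(R_{ij} + R_{jk} − R_{ik}), where R_{ab} denotes the effective resistance between a and b. -/

import Mathlib

open Finset

variable {V : Type*}

/-- The total weight incident to a vertex: `ω(i) = Σ_l ω(i,l)`. -/
noncomputable def vWeight [Fintype V] (w : V → V → ℝ) (i : V) : ℝ :=
  ∑ l, w i l

/-- The total weight of the graph (each edge counted once): `ω(G)`. -/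
noncomputable def gWeight [Fintype V] (w : V → V → ℝ) : ℝ :=
  (∑ i, ∑ l, w i l) / 2

/-- Transition probabilities of the random walk on the weighted graph:
from `i`, move to `l` with probability `ω(i,l)/ω(i)`. -/
noncomputable def walkStep [Fintype V] (w : V → V → ℝ) (i l : V) : ℝ :=
  w i l / vWeight w i

/-- `w` is a system of positive symmetric edge weights on a finite connected undirected
graph: symmetric, nonnegative, zero on the diagonal (and on non-edges), and the graph
whose edges are the pairs with positive weight is connected. -/
def IsWeight [Fintype V] (w : V → V → ℝ) : Prop :=
  (∀ a b, w a b = w b a) ∧ (∀ a b, 0 ≤ w a b) ∧ (∀ a, w a a = 0) ∧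
    (∀ a b, Relation.ReflTransGen (fun x y => 0 < w x y) a b)

/-- `hitSurv p j n i` is the probability that the Markov chain with transition kernel `p`
started at `i` has not visited `j` at any of the times `0, 1, …, n`. -/
noncomputable def hitSurv {S : Type*} [Fintype S] [DecidableEq S] (p : S → S → ℝ) (j : S) :
    ℕ → S → ℝ
  | 0 => fun i => if i = j then 0 else 1
  | n + 1 => fun i => if i = j then 0 else ∑ l, p i l * hitSurv p j n l

/-- Expected hitting time of `j` from `i`: the expected number of steps for the chain
started at `i` to first reach `j`, computed as `Σ_n P(T_j > n)`. -/
noncomputable def hitTime {S : Type*} [Fintype S] [DecidableEq S] (p : S → S → ℝ)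
    (i j : S) : ℝ :=
  ∑' n : ℕ, hitSurv p j n i

/-- A unit-current potential from `i` to `j`: Kirchhoff's equations when a unit current
enters at `i` and leaves at `j`. -/
def IsUnitPotential [Fintype V] (w : V → V → ℝ) (i j : V) (φ : V → ℝ) : Prop :=
  (∀ k, k ≠ i → k ≠ j → ∑ l, w k l * (φ k - φ l) = 0) ∧
    (∑ l, w i l * (φ i - φ l) = 1) ∧
    (∑ l, w j l * (φ j - φ l) = -1)

/-- `R` is the effective-resistance matrix of the weighted graph `w`:
`R a a = 0`, and for `a ≠ b`, `R a b = V_a - V_b` for a unit-current potential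
from `a` to `b`. -/
def IsResistance [Fintype V] (w : V → V → ℝ) (R : V → V → ℝ) : Prop :=
  (∀ a, R a a = 0) ∧
    ∀ a b, a ≠ b → ∃ φ, IsUnitPotential w a b φ ∧ R a b = φ a - φ b

/-- The weight function of an unweighted graph: weight `1` on edges, `0` elsewhere. -/
noncomputable def aw (G : SimpleGraph V) [DecidableRel G.Adj] (a b : V) : ℝ :=
  if G.Adj a b then 1 else 0

/-- Probability of a given trajectory: `trajProb p i xs` is the probability that the
chain started at `i` successively visits the vertices of the list `xs`. -/
noncomputable def trajProb {S : Type*} [Fintype S] (p : S → S → ℝ) : S → List S → ℝ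
  | _, [] => 1
  | i, x :: xs => p i x * trajProb p x xs

/-- Probability that the walk started at `i` has not visited every vertex by time `n`. -/
noncomputable def notCoveredProb [Fintype V] [DecidableEq V] (p : V → V → ℝ) (n : ℕ)
    (i : V) : ℝ :=
  ∑ xs : Fin n → V, trajProb p i (List.ofFn xs) *
    (if (i :: List.ofFn xs).toFinset = Finset.univ then 0 else 1)

/-- The cover time from `i`: the expected number of steps for the walk started at `i`
to have visited every vertex, computed as `Σ_n P(T_cov > n)`. -/
noncomputable def coverTime [Fintype V] [DecidableEq V] (p : V → V → ℝ) (i : V) : ℝ :=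
  ∑' n : ℕ, notCoveredProb p n i

/-- `visitSurv p j k n i` is the probability that the chain started at `i` is at `k` at
time `n` without having visited `j` at any of the times `0, …, n`. -/
noncomputable def visitSurv [Fintype V] [DecidableEq V] (p : V → V → ℝ) (j k : V) :
    ℕ → V → ℝ
  | 0 => fun i => if i = j then 0 else if i = k then 1 else 0
  | n + 1 => fun i => if i = j then 0 else ∑ l, p i l * visitSurv p j k n l

/-- `expVisits p i j k` is the expected number of visits to `k` (counting time `0`) of
the chain started at `i` strictly before its first visit to `j`. -/
noncomputable def expVisits [Fintype V] [DecidableEq V] (p : V → V → ℝ) (i j k : V) : ℝ :=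
  ∑' n : ℕ, visitSurv p j k n i

/-- `reachBeforeAux p i j n l` is the probability that the walk started at `l` reaches `j`
within `n` steps without visiting `i` first. -/
noncomputable def reachBeforeAux [Fintype V] [DecidableEq V] (p : V → V → ℝ) (i j : V) :
    ℕ → V → ℝ
  | 0 => fun l => if l = j then 1 else 0
  | n + 1 => fun l =>
      if l = j then 1 else if l = i then 0 else ∑ m, p l m * reachBeforeAux p i j n m

/-- The probability that the walk started at `i` reaches `j` before returning to `i`:
one step from `i` to `l`, then reach `j` before `i` (monotone limit in `n`). -/
noncomputable def escapeProb [Fintype V] [DecidableEq V] (p : V → V → ℝ) (i j : V) : ℝ :=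
  ∑ l, p i l * ⨆ n, reachBeforeAux p i j n l

/-- `hitSurvSet p F n x` is the probability that the chain started at `x` has not visited
the set `F` at any of the times `0, …, n`. -/
noncomputable def hitSurvSet {S : Type*} [Fintype S] (p : S → S → ℝ) (F : S → Prop)
    [DecidablePred F] : ℕ → S → ℝ
  | 0 => fun x => if F x then 0 else 1
  | n + 1 => fun x => if F x then 0 else ∑ y, p x y * hitSurvSet p F n y

/-- Expected hitting time of the set `F` from `x`, computed as `Σ_n P(T_F > n)`. -/
noncomputable def hitTimeSet {S : Type*} [Fintype S] (p : S → S → ℝ) (F : S → Prop)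
    [DecidablePred F] (x : S) : ℝ :=
  ∑' n : ℕ, hitSurvSet p F n x

/-- The associated chain `𝒢` on pairs `(P, i)` (visited set, current vertex): from
`(P, i)` it moves to `(P ∪ {j}, j)` with probability `ω(i,j)/ω(i)`. -/
noncomputable def pairStep [Fintype V] [DecidableEq V] (w : V → V → ℝ)
    (s t : Finset V × V) : ℝ :=
  if t.1 = insert t.2 s.1 then walkStep w s.2 t.2 else 0

/-- `exitProbAux p P j n i` is the probability that the walk started at `i` leaves `P`
within `n` steps and that the first vertex visited outside `P` is `j`. -/
noncomputable def exitProbAux [Fintype V] [DecidableEq V] (p : V → V → ℝ) (P : Finset V)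
    (j : V) : ℕ → V → ℝ
  | 0 => fun i => if i ∈ P then 0 else if i = j then 1 else 0
  | n + 1 => fun i =>
      if i ∈ P then ∑ l, p i l * exitProbAux p P j n l else if i = j then 1 else 0

/-- The probability that the first vertex outside `P` visited by the walk started at `i`
is `j` (monotone limit in the number of allowed steps). -/
noncomputable def exitProb [Fintype V] [DecidableEq V] (p : V → V → ℝ) (P : Finset V)
    (i j : V) : ℝ :=
  ⨆ n, exitProbAux p P j n i

/-- The negated weighted Laplacian `Δ` of the weighted graph `w` on `Fin n`. -/
noncomputable def negLaplacian (n : ℕ) (w : Fin n → Fin n → ℝ) :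
    Matrix (Fin n) (Fin n) ℝ :=
  Matrix.of fun k l => if k = l then -(∑ m, w k m) else w k l

/-- `Δ₂`: the negated weighted Laplacian with its first row replaced by the first row of
the identity matrix. -/
noncomputable def delta2 (n : ℕ) (hn : 0 < n) (w : Fin n → Fin n → ℝ) :
    Matrix (Fin n) (Fin n) ℝ :=
  (negLaplacian n w).updateRow ⟨0, hn⟩ (fun l => if l = ⟨0, hn⟩ then 1 else 0)

/-- The weight function obtained from `w` by adding weight `u` on the edge `{a, b}`. -/
noncomputable def addEdge [DecidableEq V] (w : V → V → ℝ) (a b : V) (u : ℝ)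
    (x y : V) : ℝ :=
  w x y + (if (x = a ∧ y = b) ∨ (x = b ∧ y = a) then u else 0)

/-!
As a function of its starting vertex, the expected number of visits to `k` before `j` vanishes at
`j` and, by first-step analysis, has Laplacian `ω(k) δ_k` off `j`. By the minimum principle it is
therefore `ω(k) (φ - φ_j)`, where `φ` is the potential of a unit current from `k` to `j`; the same
function, as a nonnegative solution of the first-step equations, also bounds the partial sums of
the expected number of visits, so that this number is finite.

If `ψ` is the potential of a unit current from `i` to `j`, then `ψ - φ` is one from `i` to `k`, so
`R_ij + R_jk - R_ik = (φ_i - φ_j) + (ψ_k - ψ_j)`, and the two terms are equal because the Laplacian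
is symmetric.
-/

open Relation
open scoped Matrix

section Weights

variable [Fintype V] {w : V → V → ℝ}

theorem vWeight_nonneg (hnonneg : ∀ a b, 0 ≤ w a b) (x : V) : 0 ≤ vWeight w x :=
  sum_nonneg fun l _ => hnonneg x l

theorem vWeight_pos_of_reflTransGen (hnonneg : ∀ a b, 0 ≤ w a b) {x y : V}
    (hpath : ReflTransGen (fun a b => 0 < w a b) x y) (hxy : x ≠ y) : 0 < vWeight w x := by
  obtain rfl | ⟨z, hz, -⟩ := hpath.cases_head
  · exact absurd rfl hxy
  · exact sum_pos' (fun l _ => hnonneg x l) ⟨z, mem_univ z, hz⟩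

theorem walkStep_nonneg (hnonneg : ∀ a b, 0 ≤ w a b) (x y : V) : 0 ≤ walkStep w x y :=
  div_nonneg (hnonneg x y) (vWeight_nonneg hnonneg x)

end Weights

section Laplacian

variable [Fintype V] [DecidableEq V] {w : V → V → ℝ}

/-- The Laplacian matrix of the weighted graph `w`, with the positive semidefinite sign convention
of `SimpleGraph.lapMatrix`. -/
noncomputable def weightedLapMatrix (w : V → V → ℝ) : Matrix V V ℝ :=
  Matrix.diagonal (vWeight w) - Matrix.of w

theorem isSymm_weightedLapMatrix (hsymm : ∀ a b, w a b = w b a) :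
    (weightedLapMatrix w).IsSymm :=
  (Matrix.isSymm_diagonal _).sub (Matrix.IsSymm.ext fun a b => hsymm b a)

theorem weightedLapMatrix_mulVec_apply_eq_sub (w : V → V → ℝ) (f : V → ℝ) (x : V) :
    (weightedLapMatrix w *ᵥ f) x = vWeight w x * f x - ∑ l, w x l * f l := by
  rw [weightedLapMatrix, Matrix.sub_mulVec, Pi.sub_apply, Matrix.mulVec_diagonal]
  rfl

theorem weightedLapMatrix_mulVec_apply (w : V → V → ℝ) (f : V → ℝ) (x : V) :
    (weightedLapMatrix w *ᵥ f) x = ∑ l, w x l * (f x - f l) := by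
  simp only [weightedLapMatrix_mulVec_apply_eq_sub, vWeight, mul_sub, sum_sub_distrib, sum_mul]

theorem weightedLapMatrix_mulVec_const (w : V → V → ℝ) (c : ℝ) :
    weightedLapMatrix w *ᵥ Function.const V c = 0 := by
  ext x
  simp [weightedLapMatrix_mulVec_apply]

theorem dotProduct_weightedLapMatrix_mulVec_comm (hsymm : ∀ a b, w a b = w b a) (f g : V → ℝ) :
    f ⬝ᵥ weightedLapMatrix w *ᵥ g = g ⬝ᵥ weightedLapMatrix w *ᵥ f := by
  rw [Matrix.dotProduct_mulVec, ← Matrix.mulVec_transpose, isSymm_weightedLapMatrix hsymm,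
    dotProduct_comm]

theorem eq_add_sum_walkStep_mul_iff {x : V} (hx : vWeight w x ≠ 0) (f : V → ℝ) (c : ℝ) :
    f x = c + ∑ l, walkStep w x l * f l ↔ (weightedLapMatrix w *ᵥ f) x = vWeight w x * c := by
  have hsum : ∑ l, walkStep w x l * f l = (∑ l, w x l * f l) / vWeight w x := by
    simp only [walkStep, div_mul_eq_mul_div, sum_div]
  rw [hsum, weightedLapMatrix_mulVec_apply_eq_sub, sub_eq_iff_eq_add, ← mul_right_inj' hx, mul_add,
    mul_div_cancel₀ _ hx]

end Laplacian

section MinimumPrinciple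

variable [Fintype V] [DecidableEq V] {w : V → V → ℝ}

theorem eq_of_forall_le_of_weightedLapMatrix_mulVec_nonneg (hnonneg : ∀ a b, 0 ≤ w a b)
    {f : V → ℝ} {x y : V} (hmin : ∀ z, f x ≤ f z) (hf : 0 ≤ (weightedLapMatrix w *ᵥ f) x)
    (hxy : 0 < w x y) : f y = f x := by
  have hterm : ∀ l ∈ univ, w x l * (f x - f l) ≤ 0 := fun l _ =>
    mul_nonpos_of_nonneg_of_nonpos (hnonneg x l) (sub_nonpos.2 (hmin l))
  rw [weightedLapMatrix_mulVec_apply] at hf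
  have hzero : w x y * (f x - f y) = 0 :=
    (sum_eq_zero_iff_of_nonpos hterm).1 (le_antisymm (sum_nonpos hterm) hf) y (mem_univ y)
  exact (sub_eq_zero.1 ((mul_eq_zero.1 hzero).resolve_left hxy.ne')).symm

variable {j : V}

theorem le_of_weightedLapMatrix_mulVec_nonneg (hnonneg : ∀ a b, 0 ≤ w a b)
    (hconn : ∀ x, ReflTransGen (fun a b => 0 < w a b) x j) {f : V → ℝ}
    (hf : ∀ x, x ≠ j → 0 ≤ (weightedLapMatrix w *ᵥ f) x) (x : V) : f j ≤ f x := by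
  have : Nonempty V := ⟨j⟩
  obtain ⟨m, hm⟩ := Finite.exists_min f
  have hpath : ∀ y, ReflTransGen (fun a b => 0 < w a b) y j → f y = f m → f j = f m := by
    intro y hyj hy
    induction hyj using ReflTransGen.head_induction_on with
    | refl => exact hy
    | @head y z hyz _ ih =>
      obtain rfl | hne := eq_or_ne y j
      · exact hy
      have hmin : ∀ v, f y ≤ f v := fun v => hy.trans_le (hm v)
      have hzy : f z = f y :=
        eq_of_forall_le_of_weightedLapMatrix_mulVec_nonneg hnonneg hmin (hf y hne) hyz
      exact ih (hzy.trans hy)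
  have hjm : f j = f m := hpath m (hconn m) rfl
  exact hjm.trans_le (hm x)

theorem sub_eq_sub_of_weightedLapMatrix_mulVec_eq (hnonneg : ∀ a b, 0 ≤ w a b)
    (hconn : ∀ x, ReflTransGen (fun a b => 0 < w a b) x j) {f g : V → ℝ}
    (hfg : ∀ x, x ≠ j → (weightedLapMatrix w *ᵥ f) x = (weightedLapMatrix w *ᵥ g) x) (x : V) :
    f x - f j = g x - g j := by
  have hle : (f - g) j ≤ (f - g) x :=
    le_of_weightedLapMatrix_mulVec_nonneg hnonneg hconn
      (fun y hy => by rw [Matrix.mulVec_sub, Pi.sub_apply, hfg y hy, sub_self]) x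
  have hge : (g - f) j ≤ (g - f) x :=
    le_of_weightedLapMatrix_mulVec_nonneg hnonneg hconn
      (fun y hy => by rw [Matrix.mulVec_sub, Pi.sub_apply, hfg y hy, sub_self]) x
  simp only [Pi.sub_apply] at hle hge
  linarith

end MinimumPrinciple

section Resistance

variable [Fintype V] [DecidableEq V] {w R : V → V → ℝ}

theorem IsUnitPotential.weightedLapMatrix_mulVec {a b : V} {φ : V → ℝ} (hab : a ≠ b)
    (hφ : IsUnitPotential w a b φ) :
    weightedLapMatrix w *ᵥ φ = Pi.single a 1 - Pi.single b 1 := by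
  obtain ⟨hoff, ha, hb⟩ := hφ
  ext x
  rw [weightedLapMatrix_mulVec_apply]
  obtain rfl | hxa := eq_or_ne x a
  · simpa [hab] using ha
  obtain rfl | hxb := eq_or_ne x b
  · simpa [hxa] using hb
  · simpa [hxa, hxb] using hoff x hxa hxb

theorem IsResistance.exists_potential (hR : IsResistance w R) (a b : V) :
    ∃ φ : V → ℝ, weightedLapMatrix w *ᵥ φ = Pi.single a 1 - Pi.single b 1 ∧
      R a b = φ a - φ b := by
  obtain rfl | hab := eq_or_ne a b
  · exact ⟨0, by simp, by simp [hR.1 a]⟩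
  · obtain ⟨φ, hφ, hRφ⟩ := hR.2 a b hab
    exact ⟨φ, hφ.weightedLapMatrix_mulVec hab, hRφ⟩

theorem IsResistance.eq_sub_of_potential (hR : IsResistance w R) (hnonneg : ∀ a b, 0 ≤ w a b)
    {a b : V} (hconn : ∀ x, ReflTransGen (fun c d => 0 < w c d) x b) {φ : V → ℝ}
    (hφ : weightedLapMatrix w *ᵥ φ = Pi.single a 1 - Pi.single b 1) :
    R a b = φ a - φ b := by
  obtain ⟨ψ, hψ, hRψ⟩ := hR.exists_potential a b
  rw [hRψ]
  exact sub_eq_sub_of_weightedLapMatrix_mulVec_eq hnonneg hconn (fun x _ => by rw [hψ, hφ]) a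

theorem potential_sub_comm (hsymm : ∀ a b, w a b = w b a) {a b c d : V} {φ ψ : V → ℝ}
    (hφ : weightedLapMatrix w *ᵥ φ = Pi.single a 1 - Pi.single b 1)
    (hψ : weightedLapMatrix w *ᵥ ψ = Pi.single c 1 - Pi.single d 1) :
    φ c - φ d = ψ a - ψ b := by
  simpa [hφ, hψ, dotProduct_sub] using dotProduct_weightedLapMatrix_mulVec_comm hsymm φ ψ

theorem IsResistance.potential_sub_eq (hR : IsResistance w R) (hsymm : ∀ a b, w a b = w b a)
    (hnonneg : ∀ a b, 0 ≤ w a b) {j k : V}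
    (hconn : ∀ x, ReflTransGen (fun a b => 0 < w a b) x k) {φ : V → ℝ}
    (hφ : weightedLapMatrix w *ᵥ φ = Pi.single k 1 - Pi.single j 1) (i : V) :
    φ i - φ j = (1 / 2) * (R i j + R j k - R i k) := by
  obtain ⟨ψ, hψ, hij⟩ := hR.exists_potential i j
  have hjk : R j k = (-φ) j - (-φ) k :=
    hR.eq_sub_of_potential hnonneg hconn (by rw [Matrix.mulVec_neg, hφ, neg_sub])
  have hik : R i k = (ψ - φ) i - (ψ - φ) k :=
    hR.eq_sub_of_potential hnonneg hconn
      (by rw [Matrix.mulVec_sub, hψ, hφ, sub_sub_sub_cancel_right])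
  have hrec : φ i - φ j = ψ k - ψ j := potential_sub_comm hsymm hφ hψ
  rw [hij, hjk, hik]
  simp only [Pi.sub_apply, Pi.neg_apply]
  linarith

end Resistance

section Visits

variable [Fintype V] [DecidableEq V] {p : V → V → ℝ} {j k : V}

theorem visitSurv_nonneg (hp : ∀ a b, 0 ≤ p a b) (j k : V) (n : ℕ) (x : V) :
    0 ≤ visitSurv p j k n x := by
  induction n generalizing x with
  | zero => unfold visitSurv; split_ifs <;> norm_num
  | succ n ih =>
    unfold visitSurv
    split_ifs
    · exact le_rfl
    · exact sum_nonneg fun l _ => mul_nonneg (hp x l) (ih l)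

theorem visitSurv_start_self (p : V → V → ℝ) (j k : V) (n : ℕ) : visitSurv p j k n j = 0 := by
  cases n <;> simp [visitSurv]

theorem visitSurv_zero_of_ne {x : V} (hx : x ≠ j) (p : V → V → ℝ) (k : V) :
    visitSurv p j k 0 x = (Pi.single k 1 : V → ℝ) x := by
  simp [visitSurv, hx, Pi.single_apply]

theorem visitSurv_succ_of_ne {x : V} (hx : x ≠ j) (p : V → V → ℝ) (k : V) (n : ℕ) :
    visitSurv p j k (n + 1) x = ∑ l, p x l * visitSurv p j k n l := by
  simp [visitSurv, hx]

theorem expVisits_start_self (p : V → V → ℝ) (j k : V) : expVisits p j j k = 0 := by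
  simp [expVisits, visitSurv_start_self]

theorem sum_range_visitSurv_le (hp : ∀ a b, 0 ≤ p a b) {h : V → ℝ} (h_nonneg : ∀ x, 0 ≤ h x)
    (h_step : ∀ x, x ≠ j → (Pi.single k 1 : V → ℝ) x + ∑ l, p x l * h l ≤ h x)
    (n : ℕ) (x : V) :
    ∑ m ∈ range n, visitSurv p j k m x ≤ h x := by
  induction n generalizing x with
  | zero => simpa using h_nonneg x
  | succ n ih =>
    obtain rfl | hx := eq_or_ne x j
    · simpa [visitSurv_start_self] using h_nonneg x
    calc ∑ m ∈ range (n + 1), visitSurv p j k m x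
        = (Pi.single k 1 : V → ℝ) x +
            ∑ l, p x l * ∑ m ∈ range n, visitSurv p j k m l := by
          simp only [sum_range_succ', visitSurv_zero_of_ne hx, visitSurv_succ_of_ne hx, mul_sum]
          rw [sum_comm, add_comm]
      _ ≤ (Pi.single k 1 : V → ℝ) x + ∑ l, p x l * h l := by
          gcongr with l
          · exact hp x l
          · exact ih l
      _ ≤ h x := h_step x hx

theorem summable_visitSurv (hp : ∀ a b, 0 ≤ p a b) {h : V → ℝ} (h_nonneg : ∀ x, 0 ≤ h x)
    (h_step : ∀ x, x ≠ j → (Pi.single k 1 : V → ℝ) x + ∑ l, p x l * h l ≤ h x) (x : V) :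
    Summable fun n => visitSurv p j k n x :=
  summable_of_sum_range_le (fun n => visitSurv_nonneg hp j k n x)
    fun n => sum_range_visitSurv_le hp h_nonneg h_step n x

theorem expVisits_eq_add_sum (hs : ∀ x, Summable fun n => visitSurv p j k n x) {x : V}
    (hx : x ≠ j) :
    expVisits p x j k = (Pi.single k 1 : V → ℝ) x + ∑ l, p x l * expVisits p l j k := by
  simp only [expVisits, (hs x).tsum_eq_zero_add, visitSurv_zero_of_ne hx, visitSurv_succ_of_ne hx,
    ← tsum_mul_left]
  rw [Summable.tsum_finsetSum fun l _ => (hs l).mul_left (p x l)]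

variable {w : V → V → ℝ}

theorem expVisits_eq_of_weightedLapMatrix_mulVec (hnonneg : ∀ a b, 0 ≤ w a b)
    (hconn : ∀ x, ReflTransGen (fun a b => 0 < w a b) x j) {h : V → ℝ} (hj : h j = 0)
    (hlap : ∀ x, x ≠ j → (weightedLapMatrix w *ᵥ h) x =
      vWeight w x * (Pi.single k 1 : V → ℝ) x) (i : V) :
    expVisits (walkStep w) i j k = h i := by
  have hω : ∀ x, x ≠ j → vWeight w x ≠ 0 := fun x hx =>
    (vWeight_pos_of_reflTransGen hnonneg (hconn x) hx).ne'
  have h_lap_nonneg : ∀ x, x ≠ j → 0 ≤ (weightedLapMatrix w *ᵥ h) x := fun x hx => by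
    have hδ : 0 ≤ (Pi.single k 1 : V → ℝ) := Pi.single_nonneg.2 zero_le_one
    rw [hlap x hx]
    exact mul_nonneg (vWeight_nonneg hnonneg x) (hδ x)
  have h_nonneg : ∀ x, 0 ≤ h x := fun x =>
    hj.ge.trans (le_of_weightedLapMatrix_mulVec_nonneg hnonneg hconn h_lap_nonneg x)
  have hs : ∀ x, Summable fun n => visitSurv (walkStep w) j k n x :=
    summable_visitSurv (walkStep_nonneg hnonneg) h_nonneg fun x hx =>
      ((eq_add_sum_walkStep_mul_iff (hω x hx) h _).2 (hlap x hx)).ge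
  have hvisits : ∀ x, x ≠ j →
      (weightedLapMatrix w *ᵥ fun y => expVisits (walkStep w) y j k) x =
        (weightedLapMatrix w *ᵥ h) x := fun x hx =>
    ((eq_add_sum_walkStep_mul_iff (hω x hx) _ _).1 (expVisits_eq_add_sum hs hx)).trans
      (hlap x hx).symm
  simpa [expVisits_start_self, hj] using
    sub_eq_sub_of_weightedLapMatrix_mulVec_eq hnonneg hconn hvisits i

theorem expVisits_eq_vWeight_mul_potential_sub (hnonneg : ∀ a b, 0 ≤ w a b)
    (hconn : ∀ x, ReflTransGen (fun a b => 0 < w a b) x j) {φ : V → ℝ}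
    (hφ : weightedLapMatrix w *ᵥ φ = Pi.single k 1 - Pi.single j 1) (i : V) :
    expVisits (walkStep w) i j k = vWeight w k * (φ i - φ j) := by
  refine expVisits_eq_of_weightedLapMatrix_mulVec hnonneg hconn
    (h := vWeight w k • (φ - Function.const V (φ j))) (by simp) (fun x hx => ?_) i
  rw [Matrix.mulVec_smul, Matrix.mulVec_sub, weightedLapMatrix_mulVec_const, sub_zero, hφ]
  obtain rfl | hxk := eq_or_ne x k
  · simp [hx]
  · simp [hx, hxk]

end Visits

theorem visits_resistance_formula_general [Fintype V] [DecidableEq V] {w : V → V → ℝ}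
    (hsymm : ∀ a b, w a b = w b a) (hnonneg : ∀ a b, 0 ≤ w a b)
    (hconn : ∀ a b, ReflTransGen (fun x y => 0 < w x y) a b)
    {R : V → V → ℝ} (hR : IsResistance w R) (i j k : V) :
    expVisits (walkStep w) i j k = (1 / 2) * vWeight w k * (R i j + R j k - R i k) := by
  obtain ⟨φ, hφ, -⟩ := hR.exists_potential k j
  calc expVisits (walkStep w) i j k
      = vWeight w k * (φ i - φ j) :=
        expVisits_eq_vWeight_mul_potential_sub hnonneg (hconn · j) hφ i
    _ = vWeight w k * ((1 / 2) * (R i j + R j k - R i k)) := by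
        rw [hR.potential_sub_eq hsymm hnonneg (hconn · k) hφ i]
    _ = (1 / 2) * vWeight w k * (R i j + R j k - R i k) := by ring

/-- The expected number of visits to `k` before hitting `j`, for the
walk started at `i`, is `U_k^{ij} = (1/2)·ω(k)·(R_{ij} + R_{jk} − R_{ik})`. -/
theorem visits_resistance_formula
    {V : Type*} [Fintype V] [DecidableEq V] (w : V → V → ℝ) (hw : IsWeight w)
    (R : V → V → ℝ) (hR : IsResistance w R) (i j : V) (hij : i ≠ j) (k : V) :
    expVisits (walkStep w) i j k =
      (1 / 2) * vWeight w k * (R i j + R j k - R i k) := by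
  obtain ⟨hsymm, hnonneg, -, hconn⟩ := hw
  exact visits_resistance_formula_general hsymm hnonneg hconn hR i j k
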